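/- arXiv:2411.02513 — 8 statements merged into one kernel-verified Lean document; each statement's English description precedes it below -/
import Mathlib

section
/- Let k and n be positive integers with 2k ≤ n. If F is a family of k-element subsets of [n] = {1,...,n} that is pairwise-intersecting (any two members of F have nonempty intersection) and the intersection of all members of F is empty, then |F| ≤ C(n-1, k-1) − C(n-1-k, k-1) + 1. -/
/-!
The proof is by induction on the size `n` of the ground set `X`, with `k` varying.

For `n = 2k` a `k`-set and its complement are never both in the family, so it has at most
`C(2k, k) / 2 = C(2k - 1, k - 1)` members, which is the bound.

For `n > 2k` the family is replaced by one at least as large in which no two members meet exactly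
in `{m}`, for some point `m` (`exists_good`).  Such a family splits into the members avoiding `m`
and the links at `m` of the others; any two of these sets still meet inside `X \ {m}`.  Each of the
two parts is either non-trivial, and bounded by induction, or a star missed by some set that meets
all its members, and bounded by direct counting (`card_star_le`).  The two bounds add up by
Pascal's rule.

To find `m`, shift `m` to every other point `y` (replace `m` by `y` in a member whenever the result
is new) as long as the family stays non-trivial.  If the family becomes stable and `F ∩ G = {m}`,
then `|F ∪ G| = 2k - 1 < n`, so there is a `y` outside `F ∪ G`, and the shift of `F` from `m` to `y`
is a member disjoint from `G`.  If shifting gets stuck because the next shift `m → y` would create a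
star, then every member meets `{m, y}`.  In that case all `k`-sets containing `{m, y}` may be added;
the family then stays non-trivial under all shifts between points other than `m` and `y`, and the
same argument applies to a third point.
-/

open Finset

/-- `𝓕` is an intersecting family of `k`-subsets of `X`. -/
structure IsIntFam (X : Finset ℕ) (k : ℕ) (𝓕 : Finset (Finset ℕ)) : Prop where
  sub : ∀ F ∈ 𝓕, F ⊆ X
  card : ∀ F ∈ 𝓕, F.card = k
  int : ∀ A ∈ 𝓕, ∀ B ∈ 𝓕, (A ∩ B).Nonempty

/-- No point lies in all members of `𝓕`; in particular `𝓕` is nonempty. -/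
def Nontriv (𝓕 : Finset (Finset ℕ)) : Prop := ∀ x : ℕ, ∃ F ∈ 𝓕, x ∉ F

/-! ### Shifting -/

/-- The family obtained from `𝓖` by replacing `m` by `y` in every member for which this is possible
and yields a set not yet in `𝓖`. -/
def shift (m y : ℕ) (𝓖 : Finset (Finset ℕ)) : Finset (Finset ℕ) :=
  UV.compression {y} {m} 𝓖

lemma card_shift (m y : ℕ) (𝓖 : Finset (Finset ℕ)) : (shift m y 𝓖).card = 𝓖.card :=
  UV.card_compression _ _ _

lemma compress_eq {m y : ℕ} (hmy : m ≠ y) (A : Finset ℕ) :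
    UV.compress {y} {m} A = if m ∈ A ∧ y ∉ A then insert y (A.erase m) else A := by
  unfold UV.compress
  by_cases h : m ∈ A ∧ y ∉ A
  · rw [if_pos h, if_pos (by simpa using h.symm)]
    ext z
    simp only [sup_eq_union, mem_sdiff, mem_union, mem_singleton, mem_insert, mem_erase]
    grind
  · rw [if_neg h, if_neg (by simpa [and_comm] using h)]

lemma mem_shift {m y : ℕ} (hmy : m ≠ y) {𝓖 : Finset (Finset ℕ)} {B : Finset ℕ} :
    B ∈ shift m y 𝓖 ↔
      (B ∈ 𝓖 ∧ (m ∈ B → y ∉ B → insert y (B.erase m) ∈ 𝓖)) ∨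
      (B ∉ 𝓖 ∧ ∃ A ∈ 𝓖, m ∈ A ∧ y ∉ A ∧ insert y (A.erase m) = B) := by
  unfold shift
  rw [UV.mem_compression]
  simp only [compress_eq hmy]
  refine or_congr (and_congr_right fun hB => ?_) (and_congr_right fun hB => ?_)
  · split_ifs with h <;> grind
  · constructor
    · rintro ⟨A, hA, h⟩
      split_ifs at h with h'
      · exact ⟨A, hA, h'.1, h'.2, h⟩
      · exact absurd (h ▸ hA) hB
    · rintro ⟨A, hA, h1, h2, h3⟩
      exact ⟨A, hA, by rw [if_pos ⟨h1, h2⟩, h3]⟩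

lemma isIntFam_shift {X : Finset ℕ} {k m y : ℕ} {𝓖 : Finset (Finset ℕ)} (h : IsIntFam X k 𝓖)
    (hmy : m ≠ y) (hy : y ∈ X) : IsIntFam X k (shift m y 𝓖) := by
  -- A moved member meets a member that stayed.
  have key : ∀ A ∈ 𝓖, m ∈ A → y ∉ A → ∀ B ∈ 𝓖, (m ∈ B → y ∉ B → insert y (B.erase m) ∈ 𝓖) →
      (insert y (A.erase m) ∩ B).Nonempty := by
    intro A hA hmA hyA B hB hB'
    by_cases hyB : y ∈ B
    · exact ⟨y, by simp [hyB]⟩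
    by_cases hmB : m ∈ B
    · obtain ⟨z, hz⟩ := h.int A hA _ (hB' hmB hyB)
      exact ⟨z, by grind⟩
    · obtain ⟨z, hz⟩ := h.int A hA B hB
      exact ⟨z, by grind⟩
  refine ⟨fun F hF => ?_, fun F hF => ?_, fun A hA B hB => ?_⟩
  · rcases (mem_shift hmy).1 hF with ⟨hF, -⟩ | ⟨-, A, hA, -, -, rfl⟩
    · exact h.sub F hF
    · have := h.sub A hA
      grind
  · rcases (mem_shift hmy).1 hF with ⟨hF, -⟩ | ⟨-, A, hA, hm, hy, rfl⟩
    · exact h.card F hF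
    · rw [card_insert_of_notMem (by grind), card_erase_of_mem hm, ← h.card A hA]
      have : 0 < A.card := card_pos.2 ⟨m, hm⟩
      omega
  · rcases (mem_shift hmy).1 hA with ⟨hA, hA'⟩ | ⟨-, A, hA₀, hmA, hyA, rfl⟩ <;>
    rcases (mem_shift hmy).1 hB with ⟨hB, hB'⟩ | ⟨-, B, hB₀, hmB, hyB, rfl⟩
    · exact h.int A hA B hB
    · rw [inter_comm]
      exact key B hB₀ hmB hyB A hA hA'
    · exact key A hA₀ hmA hyA B hB hB'
    · exact ⟨y, by simp⟩

lemma card_filter_shift_lt {m y : ℕ} (hmy : m ≠ y) {𝓖 : Finset (Finset ℕ)} {F : Finset ℕ}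
    (hF : F ∈ 𝓖) (hm : m ∈ F) (hy : y ∉ F) (hn : insert y (F.erase m) ∉ 𝓖) :
    ((shift m y 𝓖).filter (m ∈ ·)).card < (𝓖.filter (m ∈ ·)).card := by
  apply card_lt_card
  rw [ssubset_iff_of_subset]
  · refine ⟨F, by simp [hF, hm], ?_⟩
    rw [mem_filter, mem_shift hmy]
    grind
  · intro B hB
    rw [mem_filter, mem_shift hmy] at hB
    grind

/-- Among the families with a property `Q`, one with fewest members through `m` is stable under
every shift from `m` that preserves `Q`. -/
lemma exists_stable (m : ℕ) (Q : Finset (Finset ℕ) → Prop) (hQ : ∃ 𝓖, Q 𝓖) :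
    ∃ 𝓖, Q 𝓖 ∧ ∀ y, m ≠ y → Q (shift m y 𝓖) →
      ∀ F ∈ 𝓖, m ∈ F → y ∉ F → insert y (F.erase m) ∈ 𝓖 := by
  classical
  let P : ℕ → Prop := fun c => ∃ 𝓖, Q 𝓖 ∧ (𝓖.filter (m ∈ ·)).card = c
  have hP : ∃ c, P c := by
    obtain ⟨𝓖, h⟩ := hQ
    exact ⟨_, 𝓖, h, rfl⟩
  obtain ⟨𝓖, h𝓖, hc⟩ := Nat.find_spec hP
  refine ⟨𝓖, h𝓖, fun y hmy hs F hF hm hy => ?_⟩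
  by_contra hn
  have := card_filter_shift_lt hmy hF hm hy hn
  exact Nat.find_min hP (hc ▸ this) ⟨_, hs, rfl⟩

/-- If, whenever `F ∩ G = {m}`, the family contains the shifts of `F` from `m` to all points outside
`F ∪ G`, then no two members meet only in `m`: such a point exists because `2k < |X|`. -/
lemma inter_ne_of_stable {X : Finset ℕ} {k m : ℕ} {𝓖 : Finset (Finset ℕ)} (h : IsIntFam X k 𝓖)
    (hk : 2 * k < X.card)
    (hst : ∀ F ∈ 𝓖, ∀ G ∈ 𝓖, (∀ w ∈ F, w ∈ G → w = m) → m ∈ F →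
      ∀ y ∈ X, y ∉ F → y ∉ G → insert y (F.erase m) ∈ 𝓖) :
    ∀ F ∈ 𝓖, ∀ G ∈ 𝓖, ((F ∩ G).erase m).Nonempty := by
  intro F hF G hG
  obtain ⟨z, hz⟩ := h.int F hF G hG
  by_contra hne
  have hall : ∀ w ∈ F ∩ G, w = m := fun w hw => by
    by_contra hwm
    exact hne ⟨w, mem_erase.2 ⟨hwm, hw⟩⟩
  have hzm := hall z hz
  subst hzm
  obtain ⟨y, hyX, hy⟩ : ∃ y ∈ X, y ∉ F ∪ G := by
    apply exists_mem_notMem_of_card_lt_card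
    have := card_union_le F G
    rw [h.card F hF, h.card G hG] at this
    omega
  have hin := hst F hF G hG (fun w h1 h2 => hall w (mem_inter.2 ⟨h1, h2⟩)) (mem_inter.1 hz).1
    y hyX (by grind) (by grind)
  obtain ⟨w, hw⟩ := h.int _ hin G hG
  have := hall w
  grind

/-- A non-trivial intersecting family has `k ≥ 2`: two members, one of them avoiding a point `x` of the
other, share a second point. -/
lemma two_le_of_nontriv {X : Finset ℕ} {k : ℕ} {𝓖 : Finset (Finset ℕ)} (h : IsIntFam X k 𝓖)
    (hn : Nontriv 𝓖) : 2 ≤ k := by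
  obtain ⟨F, hF, -⟩ := hn 0
  obtain ⟨x, hx⟩ := h.int F hF F hF
  obtain ⟨G, hG, hxG⟩ := hn x
  obtain ⟨z, hz⟩ := h.int F hF G hG
  rw [← h.card F hF]
  apply Nat.succ_le_of_lt
  rw [one_lt_card]
  exact ⟨x, by grind, z, by grind, by grind⟩

/-! ### Deleting a point while members keep meeting -/

/-- An intersecting family of `k`-subsets of `X`, all meeting the pair `{a, b}`, which is a star at
neither `a` nor `b` and contains all `k`-subsets of `X` that include the pair. -/
structure PairFam (X : Finset ℕ) (k a b : ℕ) (𝓗 : Finset (Finset ℕ)) : Prop where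
  fam : IsIntFam X k 𝓗
  pair : ∀ F ∈ 𝓗, a ∈ F ∨ b ∈ F
  left : ∃ F ∈ 𝓗, a ∉ F
  right : ∃ F ∈ 𝓗, b ∉ F
  all : ∀ F, F ⊆ X → F.card = k → a ∈ F → b ∈ F → F ∈ 𝓗

lemma PairFam.of_shift {X : Finset ℕ} {k a b m y : ℕ} {𝓗 : Finset (Finset ℕ)}
    (h : PairFam X k a b 𝓗) (hyX : y ∈ X) (hma : m ≠ a) (hmb : m ≠ b) (hmy : m ≠ y)
    (hya : y ≠ a) (hyb : y ≠ b) : PairFam X k a b (shift m y 𝓗) := by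
  obtain ⟨hI, hp, ⟨A, hA, haA⟩, ⟨B, hB, hbB⟩, hall⟩ := h
  -- The shift changes a set only at `m` and `y`, so traces on `{a, b}` persist.
  have htr : ∀ F ∈ 𝓗, ∃ F' ∈ shift m y 𝓗, (a ∈ F' ↔ a ∈ F) ∧ (b ∈ F' ↔ b ∈ F) := by
    intro F hF
    by_cases hs : F ∈ shift m y 𝓗
    · exact ⟨F, hs, Iff.rfl, Iff.rfl⟩
    · refine ⟨insert y (F.erase m), (mem_shift hmy).2 (Or.inr ?_), by grind, by grind⟩
      by_contra hs'
      exact hs ((mem_shift hmy).2 (by grind))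
  refine ⟨isIntFam_shift hI hmy hyX, ?_, ?_, ?_, ?_⟩
  · intro F hF
    rcases (mem_shift hmy).1 hF with ⟨hF, -⟩ | ⟨-, C, hC, -, -, rfl⟩
    · exact hp F hF
    · have := hp C hC
      grind
  · obtain ⟨F, hF, h1, -⟩ := htr A hA
    exact ⟨F, hF, by rwa [h1]⟩
  · obtain ⟨F, hF, -, h1⟩ := htr B hB
    exact ⟨F, hF, by rwa [h1]⟩
  · intro F h1 h2 h3 h4
    refine (mem_shift hmy).2 (Or.inl ⟨hall F h1 h2 h3 h4, fun hmF hyF => ?_⟩)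
    apply hall
    · grind
    · rw [card_insert_of_notMem (by grind), card_erase_of_mem hmF, h2]
      have : 0 < F.card := card_pos.2 ⟨m, hmF⟩
      omega
    · grind
    · grind

/-- The case of `exists_good` in which all members meet a fixed pair `{a, b}`; here `m` is any third
point. -/
lemma exists_good_of_pair {X : Finset ℕ} {k a b : ℕ} {𝓖 : Finset (Finset ℕ)}
    (h : IsIntFam X k 𝓖) (hk2 : 2 ≤ k) (hk : 2 * k < X.card) (hn : Nontriv 𝓖)
    (ha : a ∈ X) (hb : b ∈ X) (hab : ∀ F ∈ 𝓖, a ∈ F ∨ b ∈ F) :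
    ∃ 𝓗, IsIntFam X k 𝓗 ∧ Nontriv 𝓗 ∧ 𝓖.card ≤ 𝓗.card ∧
      ∃ m ∈ X, ∀ F ∈ 𝓗, ∀ G ∈ 𝓗, ((F ∩ G).erase m).Nonempty := by
  obtain ⟨m, hmX, hm⟩ : ∃ m ∈ X, m ∉ ({a, b} : Finset ℕ) := by
    apply exists_mem_notMem_of_card_lt_card
    have := card_le_two (a := a) (b := b)
    omega
  have hma : m ≠ a := by grind
  have hmb : m ≠ b := by grind
  have hQ : ∃ 𝓗, PairFam X k a b 𝓗 ∧ 𝓖.card ≤ 𝓗.card := by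
    refine ⟨𝓖 ∪ (X.powersetCard k).filter (fun F => a ∈ F ∧ b ∈ F),
      ⟨⟨?_, ?_, ?_⟩, ?_, ?_, ?_, ?_⟩, card_le_card subset_union_left⟩
    · intro F hF
      rcases mem_union.1 hF with hF | hF
      · exact h.sub F hF
      · exact (mem_powersetCard.1 (mem_filter.1 hF).1).1
    · intro F hF
      rcases mem_union.1 hF with hF | hF
      · exact h.card F hF
      · exact (mem_powersetCard.1 (mem_filter.1 hF).1).2
    · intro A hA B hB
      rcases mem_union.1 hA with hA | hA <;> rcases mem_union.1 hB with hB | hB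
      · exact h.int A hA B hB
      · have hB := (mem_filter.1 hB).2
        rcases hab A hA with hA | hA
        · exact ⟨a, by grind⟩
        · exact ⟨b, by grind⟩
      · have hA := (mem_filter.1 hA).2
        rcases hab B hB with hB | hB
        · exact ⟨a, by grind⟩
        · exact ⟨b, by grind⟩
      · exact ⟨a, by grind⟩
    · intro F hF
      rcases mem_union.1 hF with hF | hF
      · exact hab F hF
      · exact Or.inl (mem_filter.1 hF).2.1
    · obtain ⟨F, hF, hx⟩ := hn a
      exact ⟨F, mem_union_left _ hF, hx⟩
    · obtain ⟨F, hF, hx⟩ := hn b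
      exact ⟨F, mem_union_left _ hF, hx⟩
    · intro F h1 h2 h3 h4
      exact mem_union_right _ (mem_filter.2 ⟨mem_powersetCard.2 ⟨h1, h2⟩, h3, h4⟩)
  obtain ⟨𝓗, ⟨hP, hc⟩, hst⟩ := exists_stable m
    (fun 𝓗 => PairFam X k a b 𝓗 ∧ 𝓖.card ≤ 𝓗.card) hQ
  obtain ⟨hI, hp, hA, hB, hall⟩ := id hP
  refine ⟨𝓗, hI, fun x => ?_, hc, m, hmX, inter_ne_of_stable hI hk ?_⟩
  · by_cases hxa : x = a
    · exact hxa ▸ hA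
    by_cases hxb : x = b
    · exact hxb ▸ hB
    obtain ⟨F, h1, h2, h3⟩ : ∃ F : Finset ℕ, {a, b} ⊆ F ∧ F ⊆ X.erase x ∧ F.card = k := by
      apply exists_subsuperset_card_eq
      · grind
      · exact card_le_two.trans hk2
      · have := pred_card_le_card_erase (s := X) (a := x)
        omega
    exact ⟨F, hall F (h2.trans (erase_subset _ _)) h3 (by grind) (by grind), by grind⟩
  · intro F hF G hG hFG hmF y hyX hyF hyG
    have hmy : m ≠ y := fun e => hyF (e ▸ hmF)
    -- A point of `{a, b}` missed by both `F` and `G` would put the other one into `F ∩ G = {m}`.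
    have hya : y ≠ a := fun e => hmb (hFG b ((hp F hF).resolve_left (e ▸ hyF))
      ((hp G hG).resolve_left (e ▸ hyG))).symm
    have hyb : y ≠ b := fun e => hma (hFG a ((hp F hF).resolve_right (e ▸ hyF))
      ((hp G hG).resolve_right (e ▸ hyG))).symm
    exact hst y hmy ⟨hP.of_shift hyX hma hmb hmy hya hyb, by rwa [card_shift]⟩ F hF hmF hyF

/-- When `2k < |X|`, a non-trivial family may be replaced by one at least as large whose members still
meet pairwise after a suitable point `m` is deleted. -/
lemma exists_good {X : Finset ℕ} {k : ℕ} {𝓕 : Finset (Finset ℕ)}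
    (h : IsIntFam X k 𝓕) (hk2 : 2 ≤ k) (hk : 2 * k < X.card) (hn : Nontriv 𝓕) :
    ∃ 𝓗, IsIntFam X k 𝓗 ∧ Nontriv 𝓗 ∧ 𝓕.card ≤ 𝓗.card ∧
      ∃ m ∈ X, ∀ F ∈ 𝓗, ∀ G ∈ 𝓗, ((F ∩ G).erase m).Nonempty := by
  obtain ⟨m, hmX⟩ : X.Nonempty := card_pos.1 (by omega)
  obtain ⟨𝓖, ⟨hI, hN, hc⟩, hst⟩ := exists_stable m
    (fun 𝓖 => IsIntFam X k 𝓖 ∧ Nontriv 𝓖 ∧ 𝓕.card ≤ 𝓖.card) ⟨𝓕, h, hn, le_rfl⟩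
  by_cases hall : ∀ y ∈ X, m ≠ y → Nontriv (shift m y 𝓖)
  · refine ⟨𝓖, hI, hN, hc, m, hmX, inter_ne_of_stable hI hk ?_⟩
    intro F hF G hG hFG hmF y hyX hyF hyG
    have hmy : m ≠ y := fun e => hyF (e ▸ hmF)
    exact hst y hmy ⟨isIntFam_shift hI hmy hyX, hall y hyX hmy, by rwa [card_shift]⟩ F hF hmF hyF
  · push Not at hall
    obtain ⟨y, hyX, hmy, hy⟩ := hall
    unfold Nontriv at hy
    push Not at hy
    obtain ⟨x, hx⟩ := hy
    -- Off `{m, y}` the shift changes nothing, so the new common point `x` can only be `y`.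
    have hxy : x = y := by
      obtain ⟨F, hF, hxF⟩ := hN x
      by_cases hs : F ∈ shift m y 𝓖
      · exact absurd (hx F hs) hxF
      · have : insert y (F.erase m) ∈ shift m y 𝓖 := by
          rw [mem_shift hmy] at hs ⊢
          grind
        have := hx _ this
        grind
    subst hxy
    have hpair : ∀ F ∈ 𝓖, m ∈ F ∨ x ∈ F := by
      intro F hF
      by_cases hs : F ∈ shift m x 𝓖
      · exact Or.inr (hx F hs)
      · rw [mem_shift hmy] at hs
        grind
    obtain ⟨𝓗, h1, h2, h3, h4⟩ := exists_good_of_pair hI hk2 hk hN hmX hyX hpair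
    exact ⟨𝓗, h1, h2, hc.trans h3, h4⟩

/-! ### Counting -/

/-- The members of a `j`-uniform star at `x` that all meet a set `T` avoiding `x` are, after removal
of `x`, among the `(j - 1)`-subsets of `X \ {x}` that are not contained in `X \ ({x} ∪ T)`. -/
lemma card_star_le {X T : Finset ℕ} {j t x : ℕ} {𝓗 : Finset (Finset ℕ)}
    (hsub : ∀ F ∈ 𝓗, F ⊆ X) (hcard : ∀ F ∈ 𝓗, F.card = j) (hx : ∀ F ∈ 𝓗, x ∈ F)
    (hT : T.card ≤ t) (hxT : x ∉ T) (hmeet : ∀ F ∈ 𝓗, (T ∩ F).Nonempty) :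
    𝓗.card ≤ (X.card - 1).choose (j - 1) - (X.card - 1 - t).choose (j - 1) := by
  rcases 𝓗.eq_empty_or_nonempty with rfl | ⟨F₀, hF₀⟩
  · simp
  have hxX : x ∈ X := hsub _ hF₀ (hx _ hF₀)
  have h1 : 𝓗.card ≤
      ((X.erase x).powersetCard (j - 1) \ ((X.erase x) \ T).powersetCard (j - 1)).card := by
    apply card_le_card_of_injOn (fun F => F.erase x)
    · intro F hF
      have hF : F ∈ 𝓗 := hF
      obtain ⟨z, hz⟩ := hmeet F hF
      have hs := hsub F hF
      simp only [mem_coe, mem_sdiff, mem_powersetCard]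
      refine ⟨⟨erase_subset_erase _ hs, by rw [card_erase_of_mem (hx F hF), hcard F hF]⟩, ?_⟩
      rintro ⟨h, -⟩
      have : z ∈ F.erase x := by grind
      have := h this
      grind
    · intro F hF G hG hFG
      have hF : F ∈ 𝓗 := hF
      have hG : G ∈ 𝓗 := hG
      rw [← insert_erase (hx F hF), ← insert_erase (hx G hG)]
      exact congrArg _ hFG
  rw [card_sdiff_of_subset (powersetCard_mono sdiff_subset), card_powersetCard, card_powersetCard,
    card_erase_of_mem hxX] at h1
  refine h1.trans (Nat.sub_le_sub_left (Nat.choose_le_choose _ ?_) _)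
  have := le_card_sdiff T (X.erase x)
  rw [card_erase_of_mem hxX] at this
  omega

/-- The case `n = 2k`: complementation pairs members with non-members. -/
lemma card_le_of_card_eq {X : Finset ℕ} {k : ℕ} {𝓕 : Finset (Finset ℕ)} (h : IsIntFam X k 𝓕)
    (hk : 0 < k) (hX : X.card = 2 * k) : 𝓕.card ≤ (2 * k - 1).choose (k - 1) := by
  have hinj : Set.InjOn (fun F => X \ F) (𝓕 : Set (Finset ℕ)) := by
    intro F hF G hG hFG
    rw [← inter_eq_right.2 (h.sub F hF), ← inter_eq_right.2 (h.sub G hG), ← sdiff_sdiff_self_left,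
      ← sdiff_sdiff_self_left]
    exact congrArg (X \ ·) hFG
  have hdis : Disjoint 𝓕 (𝓕.image (fun F => X \ F)) := by
    rw [disjoint_left]
    intro F hF hF'
    obtain ⟨G, hG, rfl⟩ := mem_image.1 hF'
    obtain ⟨z, hz⟩ := h.int _ hF G hG
    grind
  have hle : (𝓕 ∪ 𝓕.image (fun F => X \ F)).card ≤ (X.powersetCard k).card := by
    apply card_le_card
    apply union_subset
    · intro F hF
      exact mem_powersetCard.2 ⟨h.sub F hF, h.card F hF⟩
    · intro F hF
      obtain ⟨G, hG, rfl⟩ := mem_image.1 hF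
      refine mem_powersetCard.2 ⟨sdiff_subset, ?_⟩
      rw [card_sdiff_of_subset (h.sub G hG), h.card G hG]
      omega
  rw [card_union_of_disjoint hdis, card_image_of_injOn hinj, card_powersetCard, hX] at hle
  obtain ⟨l, rfl⟩ : ∃ l, k = l + 1 := ⟨k - 1, by omega⟩
  have e1 : (2 * (l + 1)).choose (l + 1) = (2 * l + 1).choose l + (2 * l + 1).choose (l + 1) :=
    Nat.choose_succ_succ _ _
  have e2 : (2 * l + 1).choose (l + 1) = (2 * l + 1).choose l := Nat.choose_symm_half l
  have e3 : 2 * (l + 1) - 1 = 2 * l + 1 := by omega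
  rw [e3, Nat.add_sub_cancel]
  omega

/-- The bound over an arbitrary ground set of size `n`, as needed for the induction. -/
lemma card_le_aux (n : ℕ) : ∀ (X : Finset ℕ) (k : ℕ) (𝓕 : Finset (Finset ℕ)), X.card = n →
    2 * k ≤ n → IsIntFam X k 𝓕 → Nontriv 𝓕 →
    𝓕.card ≤ (n - 1).choose (k - 1) - (n - 1 - k).choose (k - 1) + 1 := by
  induction n with
  | zero =>
    intro X k 𝓕 _ hk h hn
    have := two_le_of_nontriv h hn
    omega
  | succ n ih =>
    intro X k 𝓕 hX hk h hn
    have hk2 := two_le_of_nontriv h hn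
    rcases hk.eq_or_lt with hk | hk
    · have := card_le_of_card_eq h (by omega) (hX.trans hk.symm)
      rw [← hk]
      have e : 2 * k - 1 - k = k - 1 := by omega
      rw [e, Nat.choose_self]
      omega
    obtain ⟨𝓗, hI, hN, hc, m, hmX, hm⟩ := exists_good h hk2 (by omega) hn
    refine hc.trans ?_
    have hX' : (X.erase m).card = n := by rw [card_erase_of_mem hmX]; omega
    set 𝓐 := 𝓗.filter (m ∉ ·) with h𝓐
    set 𝓑 := (𝓗.filter (m ∈ ·)).image (·.erase m) with h𝓑
    have hmA : ∀ F ∈ 𝓐, F ∈ 𝓗 ∧ m ∉ F := fun F hF => mem_filter.1 hF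
    have hmB : ∀ F ∈ 𝓑, ∃ G ∈ 𝓗, m ∈ G ∧ G.erase m = F := by
      intro F hF
      obtain ⟨G, hG, rfl⟩ := mem_image.1 hF
      exact ⟨G, (mem_filter.1 hG).1, (mem_filter.1 hG).2, rfl⟩
    have hsplit : 𝓗.card = 𝓑.card + 𝓐.card := by
      rw [h𝓑, card_image_of_injOn, h𝓐, card_filter_add_card_filter_not]
      intro F hF G hG hFG
      have hF := (mem_filter.1 hF).2
      have hG := (mem_filter.1 hG).2
      rw [← insert_erase hF, ← insert_erase hG]
      exact congrArg _ hFG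
    have hIA : IsIntFam (X.erase m) k 𝓐 := by
      refine ⟨fun F hF => ?_, fun F hF => hI.card F (hmA F hF).1,
        fun F hF G hG => hI.int F (hmA F hF).1 G (hmA G hG).1⟩
      exact subset_erase.2 ⟨hI.sub F (hmA F hF).1, (hmA F hF).2⟩
    have hIB : IsIntFam (X.erase m) (k - 1) 𝓑 := by
      refine ⟨fun F hF => ?_, fun F hF => ?_, fun F hF G hG => ?_⟩
      · obtain ⟨F, hF₀, -, rfl⟩ := hmB F hF
        exact erase_subset_erase _ (hI.sub F hF₀)
      · obtain ⟨F, hF₀, hmF, rfl⟩ := hmB F hF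
        rw [card_erase_of_mem hmF, hI.card F hF₀]
      · obtain ⟨F, hF₀, hmF, rfl⟩ := hmB F hF
        obtain ⟨G, hG₀, hmG, rfl⟩ := hmB G hG
        obtain ⟨z, hz⟩ := hm F hF₀ G hG₀
        exact ⟨z, by grind⟩
    have hA : 𝓐.card ≤ (n - 1).choose (k - 1) - (n - 1 - k).choose (k - 1) + 1 := by
      by_cases hNA : Nontriv 𝓐
      · exact ih _ k 𝓐 hX' (by omega) hIA hNA
      · unfold Nontriv at hNA
        push Not at hNA
        obtain ⟨x, hx⟩ := hNA
        obtain ⟨T, hT, hxT⟩ := hN x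
        have := card_star_le hIA.sub hIA.card hx (hI.card T hT).le hxT
          (fun F hF => hI.int T hT F (hmA F hF).1)
        rw [hX'] at this
        omega
    have hB : 𝓑.card ≤ (n - 1).choose (k - 2) - (n - 1 - k).choose (k - 2) := by
      by_cases hNB : Nontriv 𝓑
      · have hk3 := two_le_of_nontriv hIB hNB
        have := ih _ (k - 1) 𝓑 hX' (by omega) hIB hNB
        -- The bound for `(n, k - 1)` is the smaller one since
        -- `C(n - k, k - 2) = C(n - k - 1, k - 3) + C(n - k - 1, k - 2)` and `k ≥ 3`.
        obtain ⟨l, rfl⟩ : ∃ l, k = l + 3 := ⟨k - 3, by omega⟩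
        have e1 : n - 1 - (l + 3 - 1) = (n - 1 - (l + 3)) + 1 := by omega
        have e2 : l + 3 - 1 - 1 = l + 1 := by omega
        have e3 : l + 3 - 2 = l + 1 := by omega
        rw [e1, e2, Nat.choose_succ_succ] at this
        rw [e3]
        have hpos : 0 < (n - 1 - (l + 3)).choose l := Nat.choose_pos (by omega)
        have hle : (n - 1 - (l + 3) + 1).choose (l + 1) ≤ (n - 1).choose (l + 1) :=
          Nat.choose_le_choose _ (by omega)
        rw [Nat.choose_succ_succ] at hle
        simp only [Nat.succ_eq_add_one] at *
        omega
      · unfold Nontriv at hNB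
        push Not at hNB
        obtain ⟨x, hx⟩ := hNB
        obtain ⟨T, hT, hxT⟩ := hN x
        have := card_star_le hIB.sub hIB.card hx (hI.card T hT).le hxT (fun F hF => by
          obtain ⟨F, hF₀, -, rfl⟩ := hmB F hF
          obtain ⟨z, hz⟩ := hm T hT F hF₀
          exact ⟨z, by grind⟩)
        rw [hX'] at this
        exact this
    obtain ⟨l, rfl⟩ : ∃ l, k = l + 2 := ⟨k - 2, by omega⟩
    obtain ⟨r, rfl⟩ : ∃ r, n = r + (l + 2) + 1 := ⟨n - (l + 2) - 1, by omega⟩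
    have e1 : r + (l + 2) + 1 + 1 - 1 = (r + (l + 2)) + 1 := by omega
    have e2 : r + (l + 2) + 1 - (l + 2) = r + 1 := by omega
    have e3 : r + (l + 2) + 1 - 1 = r + (l + 2) := by omega
    have e4 : r + (l + 2) - (l + 2) = r := by omega
    have e5 : l + 2 - 1 = l + 1 := by omega
    have e6 : l + 2 - 2 = l := by omega
    rw [e3, e4, e5] at hA
    rw [e3, e4, e6] at hB
    rw [e1, e2, e5, Nat.choose_succ_succ, Nat.choose_succ_succ]
    have h1 : r.choose l ≤ (r + (l + 2)).choose l := Nat.choose_le_choose _ (by omega)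
    have h2 : r.choose (l + 1) ≤ (r + (l + 2)).choose (l + 1) := Nat.choose_le_choose _ (by omega)
    simp only [Nat.succ_eq_add_one] at *
    omega

/-- The Hilton–Milner theorem. -/
theorem hilton_milner (n k : ℕ) (hk : 0 < k) (hn0 : 0 < n) (hkn : 2 * k ≤ n)
    (𝓕 : Finset (Finset ℕ))
    (hsub : ∀ F ∈ 𝓕, F ⊆ Finset.Icc 1 n)
    (hcard : ∀ F ∈ 𝓕, F.card = k)
    (hint : ∀ A ∈ 𝓕, ∀ B ∈ 𝓕, (A ∩ B).Nonempty)
    (hempty : ∀ x : ℕ, ∃ F ∈ 𝓕, x ∉ F) :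
    𝓕.card ≤ (n - 1).choose (k - 1) - (n - 1 - k).choose (k - 1) + 1 :=
  card_le_aux n (Finset.Icc 1 n) k 𝓕 (by simp) hkn ⟨hsub, hcard, hint⟩ hempty
end

section
/- Let k and n be positive integers with 2k − 1 ≤ n. Let A be a family of (k−1)-element subsets of [n] and B a family of k-element subsets of [n]. If A and B are cross-intersecting, B is nonempty, and the shadow ∂B is contained in A, then |A| + |B| ≤ C(n, k−1) − C(n−k, k−1) + 1. -/
open Finset

/-!
Write `k = j + 1`. The shadow hypothesis enters only through one consequence: any two members of `𝓑`
(equal ones included) share at least two elements. Indeed if `B ∩ B' ⊆ {x}` with `x ∈ B'`, then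
`B' \ {x}` lies in the shadow, hence in `𝓐`, and misses `B`.

For a cross-intersecting pair `𝓐` (of `j`-sets), `𝓑 ≠ ∅` (of `(j+1)`-sets, pairwise meeting in at
least two points) on a ground set of size `n ≥ 2j + 1`, the bound
`|𝓐| + |𝓑| + C(n-j-1, j) ≤ C(n, j) + 1` is proved by induction on `n` (`card_add_card_le`).

* If `n = 2j + 1`, the complements of the members of `𝓑` are `j`-sets outside `𝓐`.
* If `n ≥ 2j + 2`, fix a point `v`. Replacing `v` by another point `x` simultaneously in both
  families (the compression `UV.compression {x} {v}`) keeps all hypotheses and both cardinalities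
  (`le_card_inter_compression`), and lowers the number of members of `𝓑` through `v` unless `𝓑` is
  already stable. So `𝓑` may be assumed stable under all these replacements. Then split both families
  according to `v` (`card_add_card_le_of_stable`). The members avoiding `v` form a pair of the same
  kind with parameters `(n-1, j)`. By stability and `n ≥ 2j + 2`, the links of `v` again form a pair
  of the same kind, with parameters `(n-1, j-1)`, unless no member of `𝓑` contains `v`; in that case
  the link of `v` in `𝓐` consists of sets meeting a fixed `(j+1)`-set. Pascal's rule adds up the two
  bounds.
-/

/-- `𝓐` is a family of `j`-subsets and `𝓑` a nonempty family of `(j+1)`-subsets of `V`; every member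
of `𝓐` meets every member of `𝓑`, and any two members of `𝓑` (possibly equal) share at least two
elements. -/
structure CrossPair (V : Finset ℕ) (j : ℕ) (𝓐 𝓑 : Finset (Finset ℕ)) : Prop where
  left_sub : 𝓐 ⊆ V.powersetCard j
  right_sub : 𝓑 ⊆ V.powersetCard (j + 1)
  cross : ∀ A ∈ 𝓐, ∀ B ∈ 𝓑, 1 ≤ (A ∩ B).card
  two : ∀ A ∈ 𝓑, ∀ B ∈ 𝓑, 2 ≤ (A ∩ B).card
  ne : 𝓑.Nonempty

theorem compress_singleton (x v : ℕ) (a : Finset ℕ) :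
    UV.compress {x} {v} a = if x ∉ a ∧ v ∈ a then insert x a \ {v} else a := by
  have h : a ∪ {x} = insert x a := by rw [union_comm, insert_eq]
  simp [UV.compress, h]

/-- A compression `v ↦ x` replaces members of the family by their images only if these are new;
the new members are the sets obtained from a member by trading `v` for `x`. -/
theorem mem_shift_s1 {x v : ℕ} {s : Finset (Finset ℕ)} {a : Finset ℕ}
    (ha : a ∈ UV.compression {x} {v} s) :
    (a ∈ s ∧ (x ∉ a → v ∈ a → insert x (a.erase v) ∈ s)) ∨
      (a ∉ s ∧ ∃ c, x ∉ c ∧ v ∉ c ∧ x ≠ v ∧ insert v c ∈ s ∧ a = insert x c) := by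
  rw [UV.mem_compression] at ha
  rcases ha with ⟨h1, h2⟩ | ⟨h1, b, hb, rfl⟩
  · refine Or.inl ⟨h1, fun hx hv => ?_⟩
    rw [compress_singleton, if_pos ⟨hx, hv⟩] at h2
    have hxv : x ≠ v := fun h => hx (h ▸ hv)
    convert h2 using 1
    ext y; simp; grind
  · refine Or.inr ⟨h1, ?_⟩
    rw [compress_singleton] at h1 ⊢
    split_ifs at h1 ⊢ with h
    · have hxv : x ≠ v := fun e => h.1 (e ▸ h.2)
      refine ⟨b.erase v, by simp [h.1], by simp, hxv, by rwa [insert_erase h.2], ?_⟩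
      ext y; simp; grind
    · exact absurd hb h1

/-- Compressing two families simultaneously does not create smaller intersections between them. -/
theorem le_card_inter_compression (x v t : ℕ) (s u : Finset (Finset ℕ))
    (h : ∀ a ∈ s, ∀ b ∈ u, t ≤ (a ∩ b).card) :
    ∀ a ∈ UV.compression {x} {v} s, ∀ b ∈ UV.compression {x} {v} u, t ≤ (a ∩ b).card := by
  -- The mixed case, stated for either order of the two families.
  have mixed : ∀ (s u : Finset (Finset ℕ)), (∀ a ∈ s, ∀ b ∈ u, t ≤ (a ∩ b).card) →
      ∀ c b, x ∉ c → v ∉ c → x ≠ v → insert v c ∈ s → b ∈ u →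
      (x ∉ b → v ∈ b → insert x (b.erase v) ∈ u) → t ≤ (insert x c ∩ b).card := by
    intro s u h c b hxc hvc hxv hc hb hb'
    by_cases hxb : x ∈ b
    · refine (h _ hc b hb).trans ?_
      rw [insert_inter_of_mem hxb, card_insert_of_notMem (by simp [hxc])]
      have : insert v c ∩ b ⊆ insert v (c ∩ b) := by
        intro y; simp; grind
      exact (card_le_card this).trans (card_insert_le _ _)
    · by_cases hvb : v ∈ b
      · refine (h _ hc _ (hb' hxb hvb)).trans (card_le_card ?_)
        intro y; simp; grind
      · refine (h _ hc b hb).trans (card_le_card ?_)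
        intro y; simp; grind
  intro a ha b hb
  rcases mem_shift_s1 ha with ⟨ha1, ha2⟩ | ⟨-, c, hxc, hvc, hxv, hc, rfl⟩ <;>
    rcases mem_shift_s1 hb with ⟨hb1, hb2⟩ | ⟨-, d, hxd, hvd, hxv', hd, rfl⟩
  · exact h a ha1 b hb1
  · rw [inter_comm]
    exact mixed u s (fun p hp q hq => by rw [inter_comm]; exact h q hq p hp)
      d a hxd hvd hxv' hd ha1 ha2
  · exact mixed s u h c b hxc hvc hxv hc hb1 hb2
  · have := h _ hc _ hd
    rw [← insert_inter_distrib, card_insert_of_notMem (by simp [hvc])] at this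
    rwa [← insert_inter_distrib, card_insert_of_notMem (by simp [hxc])]

theorem compression_sub_powersetCard {x v : ℕ} {V : Finset ℕ} (hx : x ∈ V) {r : ℕ}
    {s : Finset (Finset ℕ)} (h : s ⊆ V.powersetCard r) :
    UV.compression {x} {v} s ⊆ V.powersetCard r := by
  intro a ha
  rcases mem_shift_s1 ha with ⟨ha1, -⟩ | ⟨-, c, hxc, hvc, hxv, hc, rfl⟩
  · exact h ha1
  · have := mem_powersetCard.1 (h hc)
    rw [card_insert_of_notMem hvc] at this
    rw [mem_powersetCard, card_insert_of_notMem hxc]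
    exact ⟨insert_subset hx ((subset_insert _ _).trans this.1), this.2⟩

theorem CrossPair.compression {V : Finset ℕ} {j : ℕ} {𝓐 𝓑 : Finset (Finset ℕ)}
    (h : CrossPair V j 𝓐 𝓑) {x v : ℕ} (hx : x ∈ V) :
    CrossPair V j (UV.compression {x} {v} 𝓐) (UV.compression {x} {v} 𝓑) where
  left_sub := compression_sub_powersetCard hx h.left_sub
  right_sub := compression_sub_powersetCard hx h.right_sub
  cross := le_card_inter_compression x v 1 _ _ h.cross
  two := le_card_inter_compression x v 2 _ _ h.two
  ne := by
    rw [← card_pos, UV.card_compression]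
    exact card_pos.2 h.ne

/-- Every `r`-subset of `W` disjoint from `b` is missing from `𝓐`; there are
`C(|W| - |b|, r)` of them. -/
theorem card_add_choose_le {W b : Finset ℕ} {r : ℕ} {𝓐 : Finset (Finset ℕ)}
    (hA : 𝓐 ⊆ W.powersetCard r) (hb : b ⊆ W) (h : ∀ a ∈ 𝓐, 1 ≤ (a ∩ b).card) :
    𝓐.card + (W.card - b.card).choose r ≤ W.card.choose r := by
  have hd : Disjoint 𝓐 ((W \ b).powersetCard r) := by
    rw [Finset.disjoint_left]
    intro a ha ha'
    have h1 := (mem_powersetCard.1 ha').1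
    obtain ⟨y, hy⟩ := card_pos.1 (h a ha)
    rw [mem_inter] at hy
    exact (mem_sdiff.1 (h1 hy.1)).2 hy.2
  rw [← card_sdiff_of_subset hb, ← card_powersetCard, ← card_powersetCard, ← card_union_of_disjoint hd]
  exact card_le_card (union_subset hA (powersetCard_mono sdiff_subset))

/-- The extreme case `|V| = 2j + 1`: complements of members of `𝓑` are `j`-sets outside `𝓐`. -/
theorem card_add_card_le_of_eq {V : Finset ℕ} {j : ℕ} {𝓐 𝓑 : Finset (Finset ℕ)}
    (h : CrossPair V j 𝓐 𝓑) (hV : V.card = 2 * j + 1) :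
    𝓐.card + 𝓑.card ≤ V.card.choose j := by
  have hB := fun b (hb : b ∈ 𝓑) => mem_powersetCard.1 (h.right_sub hb)
  have hinj : (𝓑.image (V \ ·)).card = 𝓑.card := by
    refine card_image_of_injOn fun b hb c hc hbc => ?_
    have hbc : V \ b = V \ c := hbc
    rw [← Finset.sdiff_sdiff_eq_self (hB b hb).1, hbc, Finset.sdiff_sdiff_eq_self (hB c hc).1]
  have hd : Disjoint 𝓐 (𝓑.image (V \ ·)) := by
    rw [Finset.disjoint_left]
    intro a ha ha'
    obtain ⟨b, hb, rfl⟩ := mem_image.1 ha'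
    have := h.cross _ ha b hb
    simp at this
  rw [← hinj, ← card_union_of_disjoint hd, ← card_powersetCard]
  refine card_le_card (union_subset h.left_sub fun a ha => ?_)
  obtain ⟨b, hb, rfl⟩ := mem_image.1 ha
  rw [mem_powersetCard, card_sdiff_of_subset (hB b hb).1, (hB b hb).2]
  exact ⟨sdiff_subset, by omega⟩

theorem nonMemberSubfamily_sub {v : ℕ} {V : Finset ℕ} {r : ℕ} {s : Finset (Finset ℕ)}
    (h : s ⊆ V.powersetCard r) : s.nonMemberSubfamily v ⊆ (V.erase v).powersetCard r := by
  intro a ha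
  rw [mem_nonMemberSubfamily] at ha
  have := mem_powersetCard.1 (h ha.1)
  exact mem_powersetCard.2 ⟨subset_erase.2 ⟨this.1, ha.2⟩, this.2⟩

theorem memberSubfamily_sub {v : ℕ} {V : Finset ℕ} {r : ℕ} {s : Finset (Finset ℕ)}
    (h : s ⊆ V.powersetCard (r + 1)) : s.memberSubfamily v ⊆ (V.erase v).powersetCard r := by
  intro a ha
  rw [mem_memberSubfamily] at ha
  have := mem_powersetCard.1 (h ha.1)
  rw [card_insert_of_notMem ha.2] at this
  exact mem_powersetCard.2 ⟨subset_erase.2 ⟨(subset_insert _ _).trans this.1, ha.2⟩, by omega⟩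

/-- The induction step for a family `𝓑` stable under replacing `v` by any other point. -/
theorem card_add_card_le_of_stable {V : Finset ℕ} {j v : ℕ} {𝓐 𝓑 : Finset (Finset ℕ)}
    (hv : v ∈ V) (hV : 2 * j + 2 ≤ V.card) (h : CrossPair V j 𝓐 𝓑)
    (stable : ∀ b ∈ 𝓑, v ∈ b → ∀ x ∈ V, x ∉ b → insert x (b.erase v) ∈ 𝓑)
    (ih : ∀ i 𝓒 𝓓, 2 * i + 1 ≤ (V.erase v).card → CrossPair (V.erase v) i 𝓒 𝓓 →
      𝓒.card + 𝓓.card + ((V.erase v).card - (i + 1)).choose i ≤ (V.erase v).card.choose i + 1) :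
    𝓐.card + 𝓑.card + (V.card - (j + 1)).choose j ≤ V.card.choose j + 1 := by
  have hW : (V.erase v).card = V.card - 1 := card_erase_of_mem hv
  have hcard := fun b (hb : b ∈ 𝓑) => (mem_powersetCard.1 (h.right_sub hb)).2
  have hj : j ≠ 0 := by
    obtain ⟨b, hb⟩ := h.ne
    have h1 := h.two b hb b hb
    have h2 := hcard b hb
    rw [inter_self] at h1
    omega
  obtain ⟨i, rfl⟩ := Nat.exists_eq_succ_of_ne_zero hj
  rw [Nat.succ_eq_add_one] at *
  have shift : ∀ d, d ∈ 𝓑.memberSubfamily v → ∀ x ∈ V, x ∉ insert v d → insert x d ∈ 𝓑 := by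
    intro d hd x hx hxd
    rw [mem_memberSubfamily] at hd
    have := stable _ hd.1 (mem_insert_self _ _) x hx hxd
    rwa [erase_insert hd.2] at this
  have avoid : ∀ s : Finset ℕ, s.card < V.card → ∃ x ∈ V, x ∉ s := fun s hs =>
    exists_mem_notMem_of_card_lt_card hs
  have h0 : CrossPair (V.erase v) (i + 1) (𝓐.nonMemberSubfamily v) (𝓑.nonMemberSubfamily v) := by
    refine ⟨nonMemberSubfamily_sub h.left_sub, nonMemberSubfamily_sub h.right_sub, ?_, ?_, ?_⟩
    · intro a ha b hb
      exact h.cross a (mem_nonMemberSubfamily.1 ha).1 b (mem_nonMemberSubfamily.1 hb).1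
    · intro a ha b hb
      exact h.two a (mem_nonMemberSubfamily.1 ha).1 b (mem_nonMemberSubfamily.1 hb).1
    · obtain ⟨b, hb⟩ := h.ne
      by_cases hvb : v ∈ b
      · obtain ⟨x, hx, hxb⟩ := avoid b (by rw [hcard b hb]; omega)
        refine ⟨insert x (b.erase v), mem_nonMemberSubfamily.2 ⟨stable b hb hvb x hx hxb, ?_⟩⟩
        have : v ≠ x := fun e => hxb (e ▸ hvb)
        simp [this]
      · exact ⟨b, mem_nonMemberSubfamily.2 ⟨hb, hvb⟩⟩
  have key0 := ih _ _ _ (by omega) h0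
  have hA := card_memberSubfamily_add_card_nonMemberSubfamily v 𝓐
  have hB := card_memberSubfamily_add_card_nonMemberSubfamily v 𝓑
  obtain ⟨m, hm⟩ : ∃ m, V.card = m + (i + 1) + 2 := ⟨V.card - (i + 3), by omega⟩
  have hm' : (V.erase v).card = m + i + 2 := by omega
  have e1 : m + i + 2 - (i + 1 + 1) = m := by omega
  have e2 : m + (i + 1) + 2 - (i + 1 + 1) = m + 1 := by omega
  have e3 : m + (i + 1) + 2 = (m + i + 2) + 1 := by omega
  have e4 : m + i + 2 - (i + 1) = m + 1 := by omega
  rw [hm'] at key0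
  rw [hm, e2, e3, Nat.choose_succ_succ m i, Nat.choose_succ_succ (m + i + 2) i]
  simp only [Nat.succ_eq_add_one]
  rw [e1] at key0
  have hAsub := memberSubfamily_sub (v := v) h.left_sub
  have hBsub := memberSubfamily_sub (v := v) h.right_sub
  rcases (𝓑.memberSubfamily v).eq_empty_or_nonempty with hempty | hne
  · rw [hempty, card_empty] at hB
    obtain ⟨b, hb⟩ := h0.ne
    have hb' := mem_powersetCard.1 (h0.right_sub hb)
    have hb2 := mem_nonMemberSubfamily.1 hb
    have := card_add_choose_le hAsub hb'.1 (fun a ha => by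
      have := h.cross _ (mem_memberSubfamily.1 ha).1 b hb2.1
      rwa [insert_inter_of_notMem hb2.2] at this)
    rw [hb'.2, hm', e1] at this
    omega
  · have h1 : CrossPair (V.erase v) i (𝓐.memberSubfamily v) (𝓑.memberSubfamily v) := by
      refine ⟨hAsub, hBsub, ?_, ?_, hne⟩
      · intro a ha d hd
        by_contra hcon
        have hda := (mem_powersetCard.1 (hAsub ha)).2
        have hdd := (mem_powersetCard.1 (hBsub hd)).2
        obtain ⟨x, hx, hxs⟩ := avoid (insert v (a ∪ d)) (by
          have := card_insert_le v (a ∪ d)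
          have := card_union_le a d
          omega)
        have hxd : x ∉ insert v d := by simp at hxs ⊢; tauto
        have := h.cross _ (mem_memberSubfamily.1 ha).1 _ (shift d hd x hx hxd)
        apply hcon
        have e : insert v a ∩ insert x d = a ∩ d := by
          have := (mem_memberSubfamily.1 ha).2
          have := (mem_memberSubfamily.1 hd).2
          ext y; simp at hxs ⊢; grind
        rwa [e] at this
      · intro c hc d hd
        by_contra hcon
        have hcc := (mem_powersetCard.1 (hBsub hc)).2
        have hdd := (mem_powersetCard.1 (hBsub hd)).2
        have hc' := mem_memberSubfamily.1 hc
        have hd' := mem_memberSubfamily.1 hd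
        -- Sharing `v`, the two links meet; hence their union leaves a point of `V` free.
        have hcd : 1 ≤ (c ∩ d).card := by
          have := h.two _ hc'.1 _ hd'.1
          rw [← insert_inter_distrib, card_insert_of_notMem (by simp [hc'.2])] at this
          omega
        obtain ⟨x, hx, hxs⟩ := avoid (insert v (c ∪ d)) (by
          have := card_insert_le v (c ∪ d)
          have := card_union_add_card_inter c d
          omega)
        have hxd : x ∉ insert v d := by simp at hxs ⊢; tauto
        have := h.two _ hc'.1 _ (shift d hd x hx hxd)
        apply hcon
        have e : insert v c ∩ insert x d = c ∩ d := by
          have := hc'.2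
          have := hd'.2
          ext y; simp at hxs ⊢; grind
        rwa [e] at this
    have key1 := ih _ _ _ (by omega) h1
    rw [hm', e4] at key1
    -- Members of the link of `v` in `𝓑` have `i + 1` elements and share two.
    have hi : i ≠ 0 := by
      obtain ⟨b, hb⟩ := hne
      have h2 := h1.two b hb b hb
      have h3 := (mem_powersetCard.1 (hBsub hb)).2
      rw [inter_self] at h2
      omega
    obtain ⟨l, rfl⟩ := Nat.exists_eq_succ_of_ne_zero hi
    have hpos : 0 < m.choose l := Nat.choose_pos (by omega)
    rw [Nat.succ_eq_add_one] at *
    rw [Nat.choose_succ_succ m l] at key1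
    simp only [Nat.succ_eq_add_one] at *
    omega

/-- The bound for pairs as in `CrossPair`, in subtraction-free form. -/
theorem card_add_card_le (n : ℕ) : ∀ (V : Finset ℕ), V.card = n → ∀ j 𝓐 𝓑, 2 * j + 1 ≤ V.card →
    CrossPair V j 𝓐 𝓑 →
    𝓐.card + 𝓑.card + (V.card - (j + 1)).choose j ≤ V.card.choose j + 1 := by
  induction n with
  | zero => intro V hV j 𝓐 𝓑 h; omega
  | succ n ih =>
    intro V hV j 𝓐 𝓑 hj h
    rcases hj.eq_or_lt with he | hlt
    · have h1 := card_add_card_le_of_eq h he.symm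
      have e : V.card - (j + 1) = j := by omega
      rw [e, Nat.choose_self]
      omega
    · obtain ⟨v, hv⟩ : V.Nonempty := card_pos.1 (by omega)
      -- Inner induction on the number of members of `𝓑` through `v`, which each useful compression
      -- lowers.
      induction hN : (𝓑.filter (v ∈ ·)).card using Nat.strong_induction_on generalizing 𝓐 𝓑 with
      | _ N ihN =>
      by_cases stable : ∀ b ∈ 𝓑, v ∈ b → ∀ x ∈ V, x ∉ b → insert x (b.erase v) ∈ 𝓑
      · refine card_add_card_le_of_stable hv hlt h stable fun i 𝓒 𝓓 hi hCD => ?_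
        exact ih _ (by rw [card_erase_of_mem hv]; omega) i 𝓒 𝓓 hi hCD
      · push Not at stable
        obtain ⟨b, hb, hvb, x, hx, hxb, hnot⟩ := stable
        have := ihN _ ?_ _ _ (h.compression (v := v) hx) rfl
        · rwa [UV.card_compression, UV.card_compression] at this
        · rw [← hN]
          refine card_lt_card ⟨fun a ha => ?_, fun hsub => ?_⟩
          · rw [mem_filter] at ha ⊢
            rcases mem_shift_s1 ha.1 with ⟨ha1, -⟩ | ⟨-, c, hxc, hvc, hxv, hc, rfl⟩
            · exact ⟨ha1, ha.2⟩
            · exact absurd ha.2 (by simp [hvc, hxv.symm])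
          · have hb' := (mem_filter.1 (hsub (mem_filter.2 ⟨hb, hvb⟩))).1
            rcases mem_shift_s1 hb' with ⟨-, hb2⟩ | ⟨hb1, -⟩
            · exact hnot (hb2 hxb hvb)
            · exact hb1 hb

/-- The main technical cross-intersecting theorem. -/
theorem cross_intersecting_with_shadow (n k : ℕ) (hk : 0 < k) (hn0 : 0 < n)
    (hkn : 2 * k - 1 ≤ n)
    (𝓐 𝓑 : Finset (Finset ℕ))
    (hAsub : ∀ A ∈ 𝓐, A ⊆ Finset.Icc 1 n)
    (hAcard : ∀ A ∈ 𝓐, A.card = k - 1)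
    (hBsub : ∀ B ∈ 𝓑, B ⊆ Finset.Icc 1 n)
    (hBcard : ∀ B ∈ 𝓑, B.card = k)
    (hcross : ∀ A ∈ 𝓐, ∀ B ∈ 𝓑, (A ∩ B).Nonempty)
    (hBne : 𝓑.Nonempty)
    (hshadow : Finset.shadow 𝓑 ⊆ 𝓐) :
    𝓐.card + 𝓑.card ≤ n.choose (k - 1) - (n - k).choose (k - 1) + 1 := by
  obtain ⟨j, rfl⟩ := Nat.exists_eq_succ_of_ne_zero hk.ne'
  simp only [Nat.succ_eq_add_one, Nat.add_sub_cancel] at *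
  have h : CrossPair (Finset.Icc 1 n) j 𝓐 𝓑 := by
    refine ⟨fun a ha => mem_powersetCard.2 ⟨hAsub a ha, hAcard a ha⟩,
      fun b hb => mem_powersetCard.2 ⟨hBsub b hb, hBcard b hb⟩,
      fun a ha b hb => card_pos.2 (hcross a ha b hb), fun a ha b hb => ?_, hBne⟩
    -- Deleting from `a` one of its points (a common one, if any) leaves a set that still meets `b`.
    have hmeet : ∀ x ∈ a, 1 ≤ ((a ∩ b).erase x).card := by
      intro x hx
      have := hcross _ (hshadow (erase_mem_shadow ha hx)) b hb
      rw [erase_inter] at this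
      exact card_pos.2 this
    obtain ⟨y, hy⟩ : a.Nonempty := card_pos.1 (by rw [hBcard a ha]; omega)
    obtain ⟨x, hx⟩ := card_pos.1 (hmeet y hy)
    have hx' := mem_of_mem_erase hx
    have := hmeet x (mem_inter.1 hx').1
    rw [card_erase_of_mem hx'] at this
    omega
  have key := card_add_card_le n (Finset.Icc 1 n) (by simp) j 𝓐 𝓑 (by simp; omega) h
  have hle : (n - (j + 1)).choose j ≤ n.choose j := Nat.choose_le_choose j (by omega)
  simp only [Nat.card_Icc, Nat.add_sub_cancel] at key
  omega
end

section
/- Let A and B be families of subsets of [n] that are cross-intersecting, and let i < j be elements of [n]. Then the families S_{i←j}(A) and S_{i←j}(B) are cross-intersecting. -/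
/-!
Two unmoved sets meet because they lie in the original families, and two moved sets share `i`.
The mixed case is `moved_inter_kept`: a moved set `insert i (A.erase j)` meets an unmoved `B`.
If `i ∈ B` they share `i`. Otherwise `B` stayed either because `j ∉ B`, and then the common
point of `A` and `B` is not `j`, or because `insert i (B.erase j)` is already in the family, and
then the common point of `A` and `insert i (B.erase j)` is neither `i` (as `i ∉ A`) nor `j`.
-/

open Finset

/-- The combinatorial shifting operation `S_{i←j}`. -/
def shiftOp (i j : ℕ) (𝓕 : Finset (Finset ℕ)) : Finset (Finset ℕ) :=
  (𝓕.filter fun F => j ∉ F ∨ i ∈ F ∨ insert i (F.erase j) ∈ 𝓕) ∪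
  ((𝓕.filter fun F => j ∈ F ∧ i ∉ F).image fun F => insert i (F.erase j))

/-- A set displaced by the shift meets every set that the shift leaves in place. -/
theorem moved_inter_kept {i j : ℕ} {𝓑 : Finset (Finset ℕ)} {A B : Finset ℕ}
    (hA : ∀ C ∈ 𝓑, (A ∩ C).Nonempty) (hiA : i ∉ A) (hB : B ∈ 𝓑)
    (hkept : j ∉ B ∨ i ∈ B ∨ insert i (B.erase j) ∈ 𝓑) :
    (insert i (A.erase j) ∩ B).Nonempty := by
  rcases hkept with hjB | hiB | hB'
  · obtain ⟨x, hx⟩ := hA B hB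
    exact ⟨x, by grind⟩
  · exact ⟨i, by grind⟩
  · obtain ⟨x, hx⟩ := hA _ hB'
    exact ⟨x, by grind⟩

/-- Shifting preserves the cross-intersecting property. -/
theorem shiftOp_cross_intersecting (n i j : ℕ)
    (hi : i ∈ Finset.Icc 1 n) (hj : j ∈ Finset.Icc 1 n) (hij : i < j)
    (𝓐 𝓑 : Finset (Finset ℕ))
    (hAsub : ∀ A ∈ 𝓐, A ⊆ Finset.Icc 1 n)
    (hBsub : ∀ B ∈ 𝓑, B ⊆ Finset.Icc 1 n)
    (hcross : ∀ A ∈ 𝓐, ∀ B ∈ 𝓑, (A ∩ B).Nonempty) :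
    ∀ A ∈ shiftOp i j 𝓐, ∀ B ∈ shiftOp i j 𝓑, (A ∩ B).Nonempty := by
  intro A hA B hB
  simp only [shiftOp, mem_union, mem_filter, mem_image] at hA hB
  rcases hA with ⟨hA, hAkept⟩ | ⟨A', ⟨hA', -, hiA'⟩, rfl⟩ <;>
    rcases hB with ⟨hB, hBkept⟩ | ⟨B', ⟨hB', -, hiB'⟩, rfl⟩
  · exact hcross A hA B hB
  · rw [inter_comm]
    exact moved_inter_kept (fun C hC => by rw [inter_comm]; exact hcross C hC B' hB')
      hiB' hA hAkept
  · exact moved_inter_kept (hcross A' hA') hiA' hB hBkept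
  · exact ⟨i, by simp⟩
end

section
/- Let F be a family of k-element subsets of [n] and let i < j be elements of [n]. Then the shadow of the shifted family is contained in the shift of the shadow: ∂(S_{i←j}(F)) ⊆ S_{i←j}(∂F). -/
/-!
Write `A'` for the set obtained from `A` by exchanging `i` and `j`. The criterion for `A` to lie in
the shifted family depends on how `A` meets `{i, j}`: if `A ∩ {i, j} = {i}`, at least one of `A`, `A'` has
to be in the family; if `A ∩ {i, j} = {j}`, both of them do; otherwise `A = A'` itself does
(`mem_shiftOp_left`, `mem_shiftOp_right`, `mem_shiftOp_of_iff`).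

A member of the shadow of the shifted family is a set `G` with `insert a G` in the shifted family
for some `a ∉ G`. If `a ∉ {i, j}`, then `G` and `insert a G` meet `{i, j}` in the same way, and
deleting `a` from the witnesses for `insert a G` gives witnesses for `G`. If `a ∈ {i, j}`, the
required sets arise by deleting `i` or `j`.
-/

open Finset

lemma mem_shiftOp_left {i j : ℕ} {𝓕 : Finset (Finset ℕ)} {A : Finset ℕ} (hi : i ∈ A) (hj : j ∉ A) :
    A ∈ shiftOp i j 𝓕 ↔ A ∈ 𝓕 ∨ insert j (A.erase i) ∈ 𝓕 := by
  have hij : i ≠ j := by rintro rfl; exact hj hi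
  simp only [shiftOp, mem_union, mem_filter, mem_image]
  constructor
  · rintro (⟨h, -⟩ | ⟨F, ⟨hF, hjF, hiF⟩, rfl⟩)
    · exact Or.inl h
    · right
      rwa [erase_insert (by simp [hiF]), insert_erase hjF]
  · rintro (h | h)
    · exact Or.inl ⟨h, Or.inl hj⟩
    · refine Or.inr ⟨_, ⟨h, by simp, by simp [hij]⟩, ?_⟩
      rw [erase_insert (by simp [hj]), insert_erase hi]

lemma mem_shiftOp_right {i j : ℕ} {𝓕 : Finset (Finset ℕ)} {A : Finset ℕ} (hi : i ∉ A) (hj : j ∈ A) :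
    A ∈ shiftOp i j 𝓕 ↔ A ∈ 𝓕 ∧ insert i (A.erase j) ∈ 𝓕 := by
  simp only [shiftOp, mem_union, mem_filter, mem_image]
  constructor
  · rintro (⟨h, h'⟩ | ⟨F, -, rfl⟩)
    · exact ⟨h, by tauto⟩
    · simp at hi
  · rintro ⟨h, h'⟩
    exact Or.inl ⟨h, Or.inr (Or.inr h')⟩

lemma mem_shiftOp_of_iff {i j : ℕ} {𝓕 : Finset (Finset ℕ)} {A : Finset ℕ} (hij : i ≠ j)
    (h : i ∈ A ↔ j ∈ A) : A ∈ shiftOp i j 𝓕 ↔ A ∈ 𝓕 := by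
  simp only [shiftOp, mem_union, mem_filter, mem_image]
  constructor
  · rintro (⟨h, -⟩ | ⟨F, -, rfl⟩)
    · assumption
    · simp [hij.symm] at h
  · exact fun hA => Or.inl ⟨hA, by tauto⟩

/-- The shadow of the shifted family is contained in the shift of the shadow. -/
theorem shadow_shiftOp_subset (n k i j : ℕ)
    (hi : i ∈ Finset.Icc 1 n) (hj : j ∈ Finset.Icc 1 n) (hij : i < j)
    (𝓕 : Finset (Finset ℕ))
    (hsub : ∀ F ∈ 𝓕, F ⊆ Finset.Icc 1 n)
    (hcard : ∀ F ∈ 𝓕, F.card = k) :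
    Finset.shadow (shiftOp i j 𝓕) ⊆ shiftOp i j (Finset.shadow 𝓕) := by
  have hne : i ≠ j := hij.ne
  intro G hG
  obtain ⟨a, ha, hA⟩ := mem_shadow_iff_insert_mem.1 hG
  have key : ∀ b B, b ∉ B → insert b B ∈ 𝓕 → B ∈ shadow 𝓕 := fun b B h h' =>
    mem_shadow_iff_insert_mem.2 ⟨b, h, h'⟩
  by_cases hiG : i ∈ G <;> by_cases hjG : j ∈ G
  · rw [mem_shiftOp_of_iff hne (by simp [hiG, hjG])] at hA ⊢
    exact key a G ha hA
  · rw [mem_shiftOp_left hiG hjG]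
    by_cases haj : a = j
    · subst haj
      rw [mem_shiftOp_of_iff hne (by simp [hiG])] at hA
      exact Or.inl (key _ G ha hA)
    · have hai : a ≠ i := by rintro rfl; exact ha hiG
      rw [mem_shiftOp_left (by simp [hiG]) (by simp [hjG, Ne.symm haj])] at hA
      refine hA.imp (key a G ha) fun h => key a _ (by simp [ha, haj]) ?_
      rwa [erase_insert_of_ne hai, insert_comm] at h
  · rw [mem_shiftOp_right hiG hjG]
    by_cases hai : a = i
    · subst hai
      rw [mem_shiftOp_of_iff hne (by simp [hjG])] at hA
      refine ⟨key _ G ha hA, key j _ (by simp [hne.symm]) ?_⟩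
      rwa [insert_comm, insert_erase hjG]
    · have haj : a ≠ j := by rintro rfl; exact ha hjG
      rw [mem_shiftOp_right (by simp [hiG, Ne.symm hai]) (by simp [hjG])] at hA
      refine hA.imp (key a G ha) fun h => key a _ (by simp [ha, hai]) ?_
      rwa [erase_insert_of_ne haj, insert_comm] at h
  · rw [mem_shiftOp_of_iff hne (by simp [hiG, hjG])]
    by_cases hai : a = i
    · subst hai
      rw [mem_shiftOp_left (by simp) (by simp [hjG, hne.symm]), erase_insert hiG] at hA
      exact hA.elim (key _ G hiG) (key _ G hjG)
    by_cases haj : a = j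
    · subst haj
      rw [mem_shiftOp_right (by simp [hiG, hne]) (by simp)] at hA
      exact key _ G ha hA.1
    · rw [mem_shiftOp_of_iff hne (by simp [hiG, hjG, Ne.symm hai, Ne.symm haj])] at hA
      exact key _ G ha hA
end

section
/- Let k and n be positive integers with 2k ≤ n. If F is a pairwise-intersecting family of k-element subsets of [n], then |F| ≤ C(n−1, k−1). -/
open Finset

/-!
Mathlib proves the Erdős–Ko–Rado theorem for families of subsets of `Fin n`, as
`Finset.erdos_ko_rado`. There, if `𝒜` is intersecting and `r`-uniform, the `(n - 2r)`-fold iterated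
shadow of the family of complements of members of `𝒜` consists of `r`-sets each disjoint from some
member of `𝒜`, so it avoids `𝒜`. If `𝒜` exceeded the bound, the Lovász form of Kruskal–Katona would
make `𝒜` and this shadow together outnumber the `r`-subsets of `Fin n`.
The bijection `i ↦ i + 1` from `Fin n` onto `{1, …, n}` preserves cardinalities and intersections,
so it carries the result over to subsets of `{1, …, n}`.
-/

/-- The Erdős–Ko–Rado theorem. -/
theorem erdos_ko_rado (n k : ℕ) (hk : 0 < k) (hn0 : 0 < n) (hkn : 2 * k ≤ n)
    (𝓕 : Finset (Finset ℕ))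
    (hsub : ∀ F ∈ 𝓕, F ⊆ Finset.Icc 1 n)
    (hcard : ∀ F ∈ 𝓕, F.card = k)
    (hint : ∀ A ∈ 𝓕, ∀ B ∈ 𝓕, (A ∩ B).Nonempty) :
    𝓕.card ≤ (n - 1).choose (k - 1) := by
  let e : Fin n ↪ ℕ := ⟨fun i => i.val + 1, fun i j h => Fin.ext (Nat.succ.inj h)⟩
  let g : Finset ℕ → Finset (Fin n) := fun F => univ.filter fun i => e i ∈ F
  have surj : ∀ F ∈ 𝓕, ∀ x ∈ F, ∃ i, e i = x := fun F hF x hx => by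
    have := Finset.mem_Icc.1 (hsub F hF hx)
    exact ⟨⟨x - 1, by lia⟩, Nat.sub_add_cancel this.1⟩
  have hmap : ∀ F ∈ 𝓕, (g F).map e = F := fun F hF => by
    ext x
    simp only [g, Finset.mem_map, Finset.mem_filter, Finset.mem_univ, true_and]
    refine ⟨fun ⟨i, hi, hx⟩ => hx ▸ hi, fun hx => ?_⟩
    obtain ⟨i, rfl⟩ := surj F hF x hx
    exact ⟨i, hx, rfl⟩
  have hinj : Set.InjOn g 𝓕 := fun A hA B hB h => by
    rw [← hmap A hA, ← hmap B hB, h]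
  rw [← Finset.card_image_of_injOn hinj]
  refine Finset.erdos_ko_rado ?_ ?_ (by lia)
  · intro A' hA' B' hB' hdisj
    obtain ⟨A, hA, rfl⟩ := Finset.mem_image.1 (Finset.mem_coe.1 hA')
    obtain ⟨B, hB, rfl⟩ := Finset.mem_image.1 (Finset.mem_coe.1 hB')
    rw [← Finset.disjoint_map e, hmap A hA, hmap B hB] at hdisj
    exact Finset.not_disjoint_iff_nonempty_inter.2 (hint A hA B hB) hdisj
  · intro A' hA'
    obtain ⟨A, hA, rfl⟩ := Finset.mem_image.1 (Finset.mem_coe.1 hA')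
    rw [← Finset.card_map e, hmap A hA, hcard A hA]
end

section
/- Let F be a shifted family of k-element subsets of [n]. Define A = {F \ {1} : F ∈ F with 1 ∈ F} and B = {F ∈ F : 1 ∉ F}. Then the shadow ∂B is contained in A. -/
open Finset

/-- A family `𝓕` of subsets of `[n] = {1,…,n}` is shifted if for all `i < j` in `[n]`,
whenever `F ∈ 𝓕` with `j ∈ F` and `i ∉ F`, also `(F \ {j}) ∪ {i} ∈ 𝓕`. -/
def IsShifted (n : ℕ) (𝓕 : Finset (Finset ℕ)) : Prop :=
  ∀ i j : ℕ, i ∈ Finset.Icc 1 n → j ∈ Finset.Icc 1 n → i < j →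
    ∀ F ∈ 𝓕, j ∈ F → i ∉ F → insert i (F.erase j) ∈ 𝓕

/-- For a shifted family `𝓕`, with `𝓐 = {F \ {1} : F ∈ 𝓕, 1 ∈ F}` and
`𝓑 = {F ∈ 𝓕 : 1 ∉ F}`, the shadow of `𝓑` is contained in `𝓐`. -/
theorem shadow_subset_of_shifted (n k : ℕ)
    (𝓕 : Finset (Finset ℕ))
    (hsub : ∀ F ∈ 𝓕, F ⊆ Finset.Icc 1 n)
    (hcard : ∀ F ∈ 𝓕, F.card = k)
    (hshift : IsShifted n 𝓕) :
    Finset.shadow (𝓕.filter fun F => 1 ∉ F) ⊆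
      ((𝓕.filter fun F => 1 ∈ F).image fun F => F.erase 1) := by
  -- An element of the shadow is `F.erase j` with `F ∈ 𝓕`, `1 ∉ F`, `j ∈ F`; shifting `j` to `1`
  -- puts `insert 1 (F.erase j)` in `𝓕`, and removing `1` from it gives back `F.erase j`.
  intro s hs
  obtain ⟨F, hF, j, hj, rfl⟩ := Finset.mem_shadow_iff.1 hs
  obtain ⟨hF, h1⟩ := Finset.mem_filter.1 hF
  have hjn := hsub F hF hj
  obtain ⟨hj1, hjn'⟩ := Finset.mem_Icc.1 hjn
  have hne : j ≠ 1 := fun h => h1 (h ▸ hj)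
  have h1n : 1 ∈ Finset.Icc 1 n := Finset.mem_Icc.2 ⟨le_rfl, hj1.trans hjn'⟩
  refine Finset.mem_image.2 ⟨insert 1 (F.erase j), Finset.mem_filter.2
    ⟨hshift 1 j h1n hjn (by omega) F hF hj h1, Finset.mem_insert_self _ _⟩, ?_⟩
  exact Finset.erase_insert fun h => h1 (Finset.mem_of_mem_erase h)
end

section
/- Let 2 ≤ k and k + 1 ≤ n, and let B₀ be a fixed k-element subset of [n] with 1 ∉ B₀. Define F to be the family consisting of B₀ together with all k-element subsets of [n] that contain 1 and have nonempty intersection with B₀. Then F is pairwise-intersecting, the intersection of all members of F is empty, and |F| = C(n−1, k−1) − C(n−1−k, k−1) + 1. -/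
/-!
Two members of the family both contain `1`, or one of them is `B₀`, so they meet.
A common element would lie in `B₀`; but for `x ∈ B₀` the set `{1} ∪ (B₀ \ {x})` belongs to the
family (it meets `B₀` because `k ≥ 2`) and avoids `x`. For the cardinality, deleting `1` turns the
members other than `B₀` into the `(k-1)`-subsets of `S = [n] \ {1}` that are not contained in
`S \ B₀`, a set of size `n - 1 - k`; this is `card_filter_one_mem`.
-/

open Finset

/-- Deleting `1` identifies the `k`-subsets of `[n]` through `1` that meet `B₀` with the
`(k-1)`-subsets of `[n] \ {1}` that are not contained in the complement of `B₀`. -/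
lemma card_filter_one_mem (n k : ℕ) (hk : 1 ≤ k) (hn : 1 ≤ n)
    (B₀ : Finset ℕ) (hB₀sub : B₀ ⊆ Finset.Icc 1 n) (hB₀card : B₀.card = k)
    (hB₀ : 1 ∉ B₀) :
    (((Finset.Icc 1 n).powersetCard k).filter
        fun F => 1 ∈ F ∧ (F ∩ B₀).Nonempty).card =
      (n - 1).choose (k - 1) - (n - 1 - k).choose (k - 1) := by
  set S := (Finset.Icc 1 n).erase 1 with hS
  have hScard : S.card = n - 1 := by
    rw [hS, card_erase_of_mem (by simp [hn])]
    simp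
  have hBS : B₀ ⊆ S := fun x hx =>
    mem_erase.2 ⟨fun h => hB₀ (h ▸ hx), hB₀sub hx⟩
  have hScard' : (S \ B₀).card = n - 1 - k := by
    rw [card_sdiff_of_subset hBS, hScard, hB₀card]
  rw [← hScard', ← hScard, ← card_powersetCard, ← card_powersetCard,
    ← card_sdiff_of_subset (powersetCard_mono sdiff_subset)]
  refine card_bij' (fun F _ => F.erase 1) (fun G _ => insert 1 G) ?_ ?_ ?_ ?_
  · intro F hF
    simp only [mem_filter, mem_powersetCard] at hF
    obtain ⟨⟨hFs, hFc⟩, h1, y, hy⟩ := hF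
    rw [mem_inter] at hy
    have hc : (F.erase 1).card = k - 1 := by rw [card_erase_of_mem h1, hFc]
    simp only [mem_sdiff, mem_powersetCard]
    refine ⟨⟨erase_subset_erase _ hFs, hc⟩, fun h => ?_⟩
    have hyF : y ∈ F.erase 1 := mem_erase.2 ⟨fun h => hB₀ (h ▸ hy.2), hy.1⟩
    exact (mem_sdiff.1 (h.1 hyF)).2 hy.2
  · intro G hG
    simp only [mem_sdiff, mem_powersetCard] at hG
    obtain ⟨⟨hGs, hGc⟩, hG⟩ := hG
    have h1 : 1 ∉ G := fun h => by simpa [hS] using hGs h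
    simp only [mem_filter, mem_powersetCard]
    refine ⟨⟨?_, ?_⟩, mem_insert_self _ _, ?_⟩
    · exact insert_subset (by simp [hn]) (hGs.trans (erase_subset _ _))
    · rw [card_insert_of_notMem h1, hGc]
      omega
    · by_contra hne
      refine hG ⟨fun x hx => mem_sdiff.2 ⟨hGs hx, fun hxB => hne ⟨x, ?_⟩⟩, hGc⟩
      exact mem_inter.2 ⟨mem_insert_of_mem hx, hxB⟩
  · intro F hF
    exact insert_erase (mem_filter.1 hF).2.1
  · intro G hG
    have hGs := (mem_powersetCard.1 (mem_sdiff.1 hG).1).1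
    exact erase_insert fun h => by simpa [hS] using hGs h

/-- The Hilton–Milner bound is attained: a single `k`-set `B₀` not containing `1`,
together with all `k`-subsets of `[n]` containing `1` and meeting `B₀`. -/
theorem hilton_milner_extremal (n k : ℕ) (hk : 2 ≤ k) (hn : k + 1 ≤ n)
    (B₀ : Finset ℕ) (hB₀sub : B₀ ⊆ Finset.Icc 1 n) (hB₀card : B₀.card = k)
    (hB₀ : 1 ∉ B₀) :
    (∀ A ∈ insert B₀ (((Finset.Icc 1 n).powersetCard k).filter
        fun F => 1 ∈ F ∧ (F ∩ B₀).Nonempty),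
      ∀ B ∈ insert B₀ (((Finset.Icc 1 n).powersetCard k).filter
        fun F => 1 ∈ F ∧ (F ∩ B₀).Nonempty),
      (A ∩ B).Nonempty) ∧
    (∀ x : ℕ, ∃ F ∈ insert B₀ (((Finset.Icc 1 n).powersetCard k).filter
        fun F => 1 ∈ F ∧ (F ∩ B₀).Nonempty), x ∉ F) ∧
    (insert B₀ (((Finset.Icc 1 n).powersetCard k).filter
        fun F => 1 ∈ F ∧ (F ∩ B₀).Nonempty)).card =
      (n - 1).choose (k - 1) - (n - 1 - k).choose (k - 1) + 1 := by
  refine ⟨?_, ?_, ?_⟩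
  · intro A hA B hB
    rw [mem_insert, mem_filter] at hA hB
    rcases hA with rfl | ⟨-, hA1, hA⟩ <;> rcases hB with rfl | ⟨-, hB1, hB⟩
    · rw [inter_self, ← card_pos]
      omega
    · rwa [inter_comm]
    · exact hA
    · exact ⟨1, mem_inter.2 ⟨hA1, hB1⟩⟩
  · intro x
    by_cases hx : x ∈ B₀
    · have hx1 : x ≠ 1 := fun h => hB₀ (h ▸ hx)
      have hc : (B₀.erase x).card = k - 1 := by rw [card_erase_of_mem hx, hB₀card]
      obtain ⟨y, hy⟩ : (B₀.erase x).Nonempty := by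
        rw [← card_pos]
        omega
      refine ⟨insert 1 (B₀.erase x), mem_insert_of_mem ?_, by simp [hx1]⟩
      simp only [mem_filter, mem_powersetCard]
      refine ⟨⟨?_, ?_⟩, mem_insert_self _ _, y, ?_⟩
      · exact insert_subset (mem_Icc.2 (by omega)) ((erase_subset _ _).trans hB₀sub)
      · rw [card_insert_of_notMem fun h => hB₀ (mem_of_mem_erase h), hc]
        omega
      · exact mem_inter.2 ⟨mem_insert_of_mem hy, mem_of_mem_erase hy⟩
    · exact ⟨B₀, mem_insert_self _ _, hx⟩
  · rw [card_insert_of_notMem fun h => hB₀ (mem_filter.1 h).2.1,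
      card_filter_one_mem n k (by omega) (by omega) B₀ hB₀sub hB₀card hB₀]
end

section
/- Let 2 ≤ k and k ≤ n, and let B₀ be a fixed k-element subset of [n]. Define B = {B₀} and A to be the family of all (k−1)-element subsets of [n] having nonempty intersection with B₀. Then A and B are cross-intersecting, ∂B ⊆ A, and |A| + |B| = C(n, k−1) − C(n−k, k−1) + 1. -/
/-!
The cross-intersection property is built into the definition of `𝓐`. A member of the shadow of
`{B₀}` has the form `B₀ \ {a}`; it is a `(k-1)`-subset of `[n]` contained in `B₀`, and it is
nonempty because `k ≥ 2`, so it meets `B₀`. For the count, the `(k-1)`-subsets of `[n]` that miss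
`B₀` are exactly the `(k-1)`-subsets of the `(n-k)`-element set `[n] \ B₀`, so `𝓐` is what remains
after removing these from all `(k-1)`-subsets of `[n]`.
-/

open Finset

/-- The bound of the main technical theorem is attained: `𝓑 = {B₀}` and `𝓐` all
`(k-1)`-subsets of `[n]` meeting `B₀`. -/
theorem cross_intersecting_extremal (n k : ℕ) (hk : 2 ≤ k) (hn : k ≤ n)
    (B₀ : Finset ℕ) (hB₀sub : B₀ ⊆ Finset.Icc 1 n) (hB₀card : B₀.card = k) :
    (∀ A ∈ ((Finset.Icc 1 n).powersetCard (k - 1)).filter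
        (fun T => (T ∩ B₀).Nonempty),
      ∀ B ∈ ({B₀} : Finset (Finset ℕ)), (A ∩ B).Nonempty) ∧
    Finset.shadow ({B₀} : Finset (Finset ℕ)) ⊆
      ((Finset.Icc 1 n).powersetCard (k - 1)).filter (fun T => (T ∩ B₀).Nonempty) ∧
    (((Finset.Icc 1 n).powersetCard (k - 1)).filter
        (fun T => (T ∩ B₀).Nonempty)).card + ({B₀} : Finset (Finset ℕ)).card =
      n.choose (k - 1) - (n - k).choose (k - 1) + 1 := by
  refine ⟨?_, ?_, ?_⟩
  · intro A hA B hB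
    rw [Finset.mem_singleton] at hB
    subst hB
    exact (Finset.mem_filter.1 hA).2
  · intro T hT
    obtain ⟨B, hB, a, ha, rfl⟩ := Finset.mem_shadow_iff.1 hT
    rw [Finset.mem_singleton] at hB
    subst hB
    have hcard : (B.erase a).card = k - 1 := by rw [Finset.card_erase_of_mem ha, hB₀card]
    have hsub : B.erase a ⊆ B := Finset.erase_subset a B
    rw [Finset.mem_filter, Finset.mem_powersetCard, Finset.inter_eq_left.2 hsub]
    exact ⟨⟨hsub.trans hB₀sub, hcard⟩, Finset.card_pos.1 (by omega)⟩
  · have hmiss : ((Finset.Icc 1 n).powersetCard (k - 1)).filter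
        (fun T => ¬ (T ∩ B₀).Nonempty) = (Finset.Icc 1 n \ B₀).powersetCard (k - 1) := by
      ext T
      rw [Finset.mem_filter, Finset.mem_powersetCard, Finset.mem_powersetCard,
        Finset.not_nonempty_iff_eq_empty, ← Finset.disjoint_iff_inter_eq_empty,
        Finset.subset_sdiff]
      tauto
    have hsplit := Finset.card_filter_add_card_filter_not
      (s := (Finset.Icc 1 n).powersetCard (k - 1)) (fun T => (T ∩ B₀).Nonempty)
    rw [hmiss, Finset.card_powersetCard, Finset.card_powersetCard,
      Finset.card_sdiff_of_subset hB₀sub, hB₀card, Nat.card_Icc, Nat.add_sub_cancel] at hsplit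
    rw [Finset.card_singleton]
    omega
end
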